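/- arXiv:2006.12022 — 2 statements merged into one kernel-verified Lean document; each statement's English description precedes it below -/
import Mathlib

section
/- Let 1 ≤ q < p < ∞ and μ a probability measure on a closed set S ⊆ ℝ^d with ∫|x|^p μ(dx) < ∞. Then the p-Wasserstein ball B_δ(μ) = {ν : W_p(μ,ν) ≤ δ} (with W_p defined using a lower semicontinuous extended norm ‖·‖_* satisfying |x| ≤ c‖x‖_* for some c > 0) is compact in the q-Wasserstein distance defined with the Euclidean norm. -/
open Set MeasureTheory Filter Topology
open scoped ENNReal RealInnerProductSpace

/-- The `p`-Wasserstein "distance" on `ℝ^d` with transport cost given by an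
extended (lower semicontinuous) norm-like function `N`. -/
noncomputable def WpCost {d : ℕ} (N : EuclideanSpace ℝ (Fin d) → ℝ≥0∞) (p : ℝ)
    (μ ν : Measure (EuclideanSpace ℝ (Fin d))) : ℝ≥0∞ :=
  ⨅ π ∈ {π : Measure (EuclideanSpace ℝ (Fin d) × EuclideanSpace ℝ (Fin d)) |
      π.map Prod.fst = μ ∧ π.map Prod.snd = ν},
    (∫⁻ z, N (z.1 - z.2) ^ p ∂π) ^ (1 / p)

/-- The `q`-Wasserstein distance with respect to the Euclidean norm. -/
noncomputable def WpEucl {d : ℕ} (q : ℝ)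
    (μ ν : Measure (EuclideanSpace ℝ (Fin d))) : ℝ≥0∞ :=
  ⨅ π ∈ {π : Measure (EuclideanSpace ℝ (Fin d) × EuclideanSpace ℝ (Fin d)) |
      π.map Prod.fst = μ ∧ π.map Prod.snd = ν},
    (∫⁻ z, ENNReal.ofReal (‖z.1 - z.2‖ ^ q) ∂π) ^ (1 / q)

lemma lintegral_le_liminf_lintegral_of_lowerSemicontinuous {Ω : Type*} [MeasurableSpace Ω]
    [TopologicalSpace Ω] [BorelSpace Ω] [HasOuterApproxClosed Ω] {μ : ProbabilityMeasure Ω}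
    {μs : ℕ → ProbabilityMeasure Ω} (hlim : Tendsto μs atTop (𝓝 μ)) {f : Ω → ℝ≥0∞}
    (hf : LowerSemicontinuous f) :
    ∫⁻ x, f x ∂(μ : Measure Ω) ≤ liminf (fun n => ∫⁻ x, f x ∂(μs n : Measure Ω)) atTop := by
  have trunc (k : ℕ) : ∫⁻ x, min (f x) k ∂(μ : Measure Ω) ≤
      liminf (fun n => ∫⁻ x, f x ∂(μs n : Measure Ω)) atTop := by
    have hfin (x : Ω) : min (f x) k ≠ ∞ := by simp
    have hmeas : Measurable fun x => (min (f x) k).toReal :=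
      (hf.measurable.min measurable_const).ennreal_toReal
    have hlayer (ρ : Measure Ω) : ∫⁻ x, min (f x) k ∂ρ =
        ∫⁻ t in Ioi 0, ρ {x : Ω | t < (min (f x) k).toReal} := by
      rw [← lintegral_eq_lintegral_meas_lt ρ (ae_of_all _ fun _ => ENNReal.toReal_nonneg)
        hmeas.aemeasurable]
      simp [ENNReal.ofReal_toReal (hfin _)]
    have hopen (t : ℝ) (ht : t ∈ Ioi (0 : ℝ)) : IsOpen {x : Ω | t < (min (f x) k).toReal} := by
      have heq : {x : Ω | t < (min (f x) k).toReal} =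
          if t < k then f ⁻¹' Ioi (ENNReal.ofReal t) else ∅ := by
        ext x
        rw [mem_ofPred_eq, ← ENNReal.ofReal_lt_iff_lt_toReal ht.le (hfin x), lt_min_iff,
          ← ENNReal.ofReal_natCast, ENNReal.ofReal_lt_ofReal_iff_of_nonneg ht.le]
        split_ifs with h <;> simp [h]
      rw [heq]
      split_ifs
      · exact hf.isOpen_preimage _
      · exact isOpen_empty
    calc ∫⁻ x, min (f x) k ∂(μ : Measure Ω)
        = ∫⁻ t in Ioi 0, (μ : Measure Ω) {x : Ω | t < (min (f x) k).toReal} := hlayer _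
      _ ≤ ∫⁻ t in Ioi 0, liminf
            (fun n => (μs n : Measure Ω) {x : Ω | t < (min (f x) k).toReal}) atTop :=
          setLIntegral_mono' measurableSet_Ioi fun t ht =>
            ProbabilityMeasure.le_liminf_measure_open_of_tendsto hlim (hopen t ht)
      _ ≤ liminf (fun n => ∫⁻ t in Ioi 0,
            (μs n : Measure Ω) {x : Ω | t < (min (f x) k).toReal}) atTop :=
          lintegral_liminf_le fun n => Antitone.measurable fun s t hst =>
            measure_mono fun x hx => lt_of_le_of_lt hst hx
      _ ≤ liminf (fun n => ∫⁻ x, f x ∂(μs n : Measure Ω)) atTop := by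
          simp only [← hlayer]
          exact liminf_le_liminf (Eventually.of_forall fun n =>
            lintegral_mono fun x => min_le_left _ _)
  have hsup (x : Ω) : f x = ⨆ k : ℕ, min (f x) k := by
    rw [← inf_iSup_eq, ENNReal.iSup_natCast, inf_top_eq]
  calc ∫⁻ x, f x ∂(μ : Measure Ω) = ∫⁻ x, ⨆ k : ℕ, min (f x) k ∂(μ : Measure Ω) :=
        lintegral_congr hsup
    _ = ⨆ k : ℕ, ∫⁻ x, min (f x) k ∂(μ : Measure Ω) :=
        lintegral_iSup (fun k => hf.measurable.min measurable_const) fun i j hij x =>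
          min_le_min_left _ (by exact_mod_cast hij)
    _ ≤ _ := iSup_le trunc

lemma exists_finite_partition_null_frontier {E : Type*} [NormedAddCommGroup E] [ProperSpace E]
    [MeasurableSpace E] [BorelSpace E] (ν : Measure E) [IsFiniteMeasure ν] (R : ℝ) {ε : ℝ}
    (hε : 0 < ε) :
    ∃ (t : Finset E) (T : E → Set t), (∀ s, MeasurableSet (T ⁻¹' {s})) ∧
      (∀ s, ν (frontier (T ⁻¹' {s})) = 0) ∧
      ∀ x y, ‖x‖ ≤ R → T x = T y → ‖x - y‖ ≤ ε := by
  have hr (x : E) : ∃ r ∈ Ioo 0 (ε / 2), ν (frontier (Metric.thickening r {x})) = 0 :=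
    exists_null_frontier_thickening ν {x} (half_pos hε)
  choose r hr hν using hr
  simp only [Metric.thickening_singleton] at hν
  obtain ⟨t, -, ht⟩ := (isCompact_closedBall (0 : E) R).elim_nhds_subcover
    (fun x => Metric.ball x (r x)) fun x _ => Metric.ball_mem_nhds x (hr x).1
  refine ⟨t, fun x => {i | x ∈ Metric.ball i.1 (r i)}, fun s => ?_, fun s => ?_, ?_⟩
  · have heq : (fun x => {i : t | x ∈ Metric.ball i.1 (r i)}) ⁻¹' {s} =
        ⋂ i : t, {x | x ∈ Metric.ball i.1 (r i) ↔ i ∈ s} := by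
      ext x
      simp [Set.ext_iff]
    rw [heq]
    refine MeasurableSet.iInter fun i => ?_
    by_cases hi : i ∈ s
    · simp only [hi, iff_true]
      exact Metric.isOpen_ball.measurableSet
    · simp only [hi, iff_false]
      exact Metric.isOpen_ball.measurableSet.compl
  · refine measure_mono_null (t := ⋃ i : t, frontier (Metric.ball i.1 (r i))) ?_
      (measure_iUnion_null fun i => hν i)
    intro x hx
    by_contra hnot
    simp only [mem_iUnion, not_exists] at hnot
    have hloc : ∀ᶠ y in 𝓝 x, ∀ i : t, y ∈ Metric.ball i.1 (r i) ↔ x ∈ Metric.ball i.1 (r i) := by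
      refine eventually_all.2 fun i => ?_
      have h := hnot i
      rw [frontier, Metric.isOpen_ball.interior_eq, Set.mem_sdiff, not_and, not_not] at h
      by_cases hxi : x ∈ Metric.ball i.1 (r i)
      · filter_upwards [Metric.isOpen_ball.mem_nhds hxi] with y hy
        simp only [hy, hxi]
      · filter_upwards [isClosed_closure.isOpen_compl.mem_nhds fun hc => hxi (h hc)] with y hy
        exact iff_of_false (fun hy' => hy (subset_closure hy')) hxi
    have hconst : ∀ᶠ y in 𝓝 x, {i : t | y ∈ Metric.ball i.1 (r i)} =
        {i : t | x ∈ Metric.ball i.1 (r i)} := hloc.mono fun y hy => Set.ext hy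
    by_cases hxs : {i : t | x ∈ Metric.ball i.1 (r i)} = s
    · exact hx.2 (mem_interior_iff_mem_nhds.2 (hconst.mono fun y hy => hy.trans hxs))
    · obtain ⟨y, hy, hys⟩ := (mem_closure_iff_frequently.1 hx.1).and_eventually hconst |>.exists
      exact hxs (hys.symm.trans hy)
  · intro x y hx hxy
    obtain ⟨i, hi, hxi⟩ := mem_iUnion₂.1 (ht (by simpa using hx))
    have hyi : y ∈ Metric.ball i (r i) := (Set.ext_iff.1 hxy ⟨i, hi⟩).1 hxi
    rw [← dist_eq_norm]
    have := dist_triangle_right x y i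
    have := (hr i).2
    rw [Metric.mem_ball] at hxi hyi
    linarith

open ProbabilityTheory in
lemma exists_coupling_measure_ne_le {X ι : Type*} [MeasurableSpace X] [Fintype ι]
    (α β : Measure X) [IsProbabilityMeasure α] [IsProbabilityMeasure β] (T : X → ι)
    (hT : ∀ i, MeasurableSet (T ⁻¹' {i})) :
    ∃ π : Measure (X × X), π.map Prod.fst = α ∧ π.map Prod.snd = β ∧
      π {z | T z.1 ≠ T z.2} ≤ ∑ i, (α (T ⁻¹' {i}) - β (T ⁻¹' {i})) := by
  classical
  set a : ι → ℝ≥0∞ := fun i => α (T ⁻¹' {i})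
  set b : ι → ℝ≥0∞ := fun i => β (T ⁻¹' {i})
  set m : ι → ℝ≥0∞ := fun i => min (a i) (b i)
  have ha (i : ι) : m i + (a i - m i) = a i := add_tsub_cancel_of_le (min_le_left _ _)
  have hb (i : ι) : m i + (b i - m i) = b i := add_tsub_cancel_of_le (min_le_right _ _)
  have hsum (ρ : Measure X) [IsProbabilityMeasure ρ] : ∑ i, ρ (T ⁻¹' {i}) = 1 := by
    rw [← measure_biUnion_finset (fun i _ j _ hij => Disjoint.preimage T (by simpa using hij))
      fun i _ => hT i]
    convert measure_univ (μ := ρ)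
    ext x
    simp
  have hcond (ρ : Measure X) [IsProbabilityMeasure ρ] :
      ∑ i, ρ (T ⁻¹' {i}) • ρ[|T ⁻¹' {i}] = ρ := by
    ext s hs
    simp only [Measure.coe_finsetSum, Measure.coe_smul, Finset.sum_apply, Pi.smul_apply,
      smul_eq_mul]
    simp_rw [mul_comm (ρ _), cond_mul_eq_inter (hT _)]
    rw [← measure_biUnion_finset (fun i _ j _ hij =>
      (Disjoint.preimage T (by simpa using hij)).mono inter_subset_left inter_subset_left)
      fun i _ => (hT i).inter hs]
    congr 1
    ext x
    simp
  have hone (ρ : Measure X) [IsProbabilityMeasure ρ] (i : ι) (w : ℝ≥0∞)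
      (hw : w ≤ ρ (T ⁻¹' {i})) : w * ρ[|T ⁻¹' {i}] univ = w := by
    by_cases h : ρ (T ⁻¹' {i}) = 0
    · simp [le_zero_iff.1 (h ▸ hw)]
    · have := cond_isProbabilityMeasure (μ := ρ) h
      simp
  set r : ℝ≥0∞ := ∑ i, (a i - m i) with hr
  have hmtop : ∑ i, m i ≠ ∞ := by
    refine ne_top_of_le_ne_top (ENNReal.one_ne_top) ((Finset.sum_le_sum fun i _ => ?_).trans
      (hsum α).le)
    exact min_le_left _ _
  have hr' : r = ∑ i, (b i - m i) := by
    rw [hr, ← ENNReal.add_right_inj hmtop, ← Finset.sum_add_distrib, ← Finset.sum_add_distrib]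
    simp only [ha, hb]
    exact (hsum α).trans (hsum β).symm
  have hrtop : r ≠ ∞ := by
    refine ne_top_of_le_ne_top (ENNReal.one_ne_top) ((Finset.sum_le_sum fun i _ => ?_).trans
      (hsum α).le)
    exact tsub_le_self
  set α' : Measure X := ∑ i, (a i - m i) • α[|T ⁻¹' {i}] with hα'
  set β' : Measure X := ∑ i, (b i - m i) • β[|T ⁻¹' {i}] with hβ'
  have hα'r : α' univ = r := by
    simp only [hα', Measure.coe_finsetSum, Measure.coe_smul, Finset.sum_apply, Pi.smul_apply,
      smul_eq_mul]
    exact Finset.sum_congr rfl fun i _ => hone α i _ tsub_le_self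
  have hβ'r : β' univ = r := by
    simp only [hβ', hr', Measure.coe_finsetSum, Measure.coe_smul, Finset.sum_apply,
      Pi.smul_apply, smul_eq_mul]
    exact Finset.sum_congr rfl fun i _ => hone β i _ tsub_le_self
  have : IsFiniteMeasure α' := ⟨by rw [hα'r]; exact hrtop.lt_top⟩
  have : IsFiniteMeasure β' := ⟨by rw [hβ'r]; exact hrtop.lt_top⟩
  have hcancel (ρ : Measure X) (hρ : ρ univ = r) : r⁻¹ • r • ρ = ρ := by
    by_cases h : r = 0
    · rw [h, Measure.measure_univ_eq_zero] at hρ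
      simp [hρ]
    · rw [smul_smul, ENNReal.inv_mul_cancel h hrtop, one_smul]
  refine ⟨∑ i, m i • (α[|T ⁻¹' {i}]).prod (β[|T ⁻¹' {i}]) + r⁻¹ • α'.prod β', ?_, ?_, ?_⟩
  · rw [Measure.map_add _ _ measurable_fst, Measure.map_finset_sum measurable_fst.aemeasurable,
      Measure.map_smul, Measure.map_fst_prod, hβ'r, hcancel _ hα'r, hα', ← Finset.sum_add_distrib]
    conv_rhs => rw [← hcond α]
    refine Finset.sum_congr rfl fun i _ => ?_
    rw [Measure.map_smul, Measure.map_fst_prod, smul_smul, hone β i _ (min_le_right _ _),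
      ← add_smul, ha]
  · rw [Measure.map_add _ _ measurable_snd, Measure.map_finset_sum measurable_snd.aemeasurable,
      Measure.map_smul, Measure.map_snd_prod, hα'r, hcancel _ hβ'r, hβ', ← Finset.sum_add_distrib]
    conv_rhs => rw [← hcond β]
    refine Finset.sum_congr rfl fun i _ => ?_
    rw [Measure.map_smul, Measure.map_snd_prod, smul_smul, hone α i _ (min_le_left _ _),
      ← add_smul, hb]
  · have hdiag (i : ι) :
        (α[|T ⁻¹' {i}]).prod (β[|T ⁻¹' {i}]) {z | T z.1 ≠ T z.2} = 0 := by
      refine measure_mono_null (t := (T ⁻¹' {i})ᶜ ×ˢ univ ∪ univ ×ˢ (T ⁻¹' {i})ᶜ) ?_ ?_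
      · intro z hz
        by_contra h
        simp only [mem_union, mem_prod, mem_compl_iff, mem_preimage, mem_singleton_iff, mem_univ,
          and_true, true_and, not_or, not_not] at h
        exact hz (h.1.trans h.2.symm)
      · have hnull (ρ : Measure X) : ρ[|T ⁻¹' {i}] (T ⁻¹' {i})ᶜ = 0 := by
          rw [cond_apply (hT i)]
          simp
        refine measure_union_null ?_ ?_ <;> rw [Measure.prod_prod, hnull] <;> simp
    calc _ = r⁻¹ * (α'.prod β') {z | T z.1 ≠ T z.2} := by simp [hdiag]
      _ ≤ r⁻¹ * (r * r) := by
          gcongr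
          refine (measure_mono (subset_univ _)).trans ?_
          rw [← univ_prod_univ, Measure.prod_prod, hα'r, hβ'r]
      _ ≤ r := by
          rw [← mul_assoc]
          exact mul_le_of_le_one_left' (ENNReal.inv_mul_le_one r)
      _ = _ := Finset.sum_congr rfl fun i _ => tsub_min

lemma isTightMeasureSet_of_lintegral_enorm_rpow_le {E : Type*} [NormedAddCommGroup E]
    [ProperSpace E] [MeasurableSpace E] [BorelSpace E] {p : ℝ} (hp : 0 < p) {M : ℝ≥0∞}
    (hM : M ≠ ∞) {A : Set (Measure E)} (hA : ∀ ρ ∈ A, ∫⁻ x, ‖x‖ₑ ^ p ∂ρ ≤ M) :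
    IsTightMeasureSet A := by
  refine isTightMeasureSet_of_tendsto_measure_norm_gt ?_
  have hlim : Tendsto (fun r : ℝ => M / ENNReal.ofReal r ^ p) atTop (𝓝 0) := by
    have h := ((ENNReal.tendsto_rpow_at_top hp).comp ENNReal.tendsto_ofReal_atTop)
    simpa using ENNReal.Tendsto.const_div h (Or.inr hM)
  refine tendsto_of_tendsto_of_tendsto_of_le_of_le' tendsto_const_nhds hlim
    (Eventually.of_forall fun _ => zero_le) ?_
  filter_upwards [eventually_gt_atTop 0] with r hr
  refine iSup₂_le fun ρ hρ => ?_
  have hsub : {x : E | r < ‖x‖} ⊆ {x | ENNReal.ofReal r ^ p ≤ ‖x‖ₑ ^ p} := fun x hx => by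
    have hx' : r < ‖x‖ := hx
    show ENNReal.ofReal r ^ p ≤ ‖x‖ₑ ^ p
    rw [← ofReal_norm]
    gcongr
  refine (measure_mono hsub).trans ((meas_ge_le_lintegral_div (by fun_prop) ?_ ?_).trans ?_)
  · simp [hr]
  · finiteness
  · gcongr
    exact hA ρ hρ

lemma enorm_sub_rpow_le {E : Type*} [NormedAddCommGroup E] {q p R η : ℝ} (hq : 0 < q)
    (hqp : q < p) (hR : 0 < R) (x y : E) (P : Prop) [Decidable P]
    (hP : ¬ P → ‖x‖ ≤ R → ‖x - y‖ ≤ η) :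
    ‖x - y‖ₑ ^ q ≤ ENNReal.ofReal η ^ q + ENNReal.ofReal (2 * R) ^ q * (if P then 1 else 0) +
      2 ^ q * (ENNReal.ofReal R ^ (p - q))⁻¹ * (‖x‖ₑ ^ p + ‖y‖ₑ ^ p) := by
  have htail (w : E) (hw : R < ‖w‖) :
      ‖w‖ₑ ^ q ≤ (ENNReal.ofReal R ^ (p - q))⁻¹ * ‖w‖ₑ ^ p := by
    have hR0 : ENNReal.ofReal R ^ (p - q) ≠ 0 := by
      simp [hR]
    rw [mul_comm, ← div_eq_mul_inv, ENNReal.le_div_iff_mul_le (Or.inl hR0) (Or.inl (by finiteness))]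
    calc ‖w‖ₑ ^ q * ENNReal.ofReal R ^ (p - q) ≤ ‖w‖ₑ ^ q * ‖w‖ₑ ^ (p - q) := by
          rw [← ofReal_norm]
          gcongr
      _ = ‖w‖ₑ ^ p := by
          rw [← ENNReal.rpow_add_of_nonneg _ _ hq.le (sub_pos.2 hqp).le]
          congr 1
          ring
  have hmax (w : E) (hxw : ‖x‖ ≤ ‖w‖) (hyw : ‖y‖ ≤ ‖w‖) : ‖x - y‖ₑ ^ q ≤ 2 ^ q * ‖w‖ₑ ^ q := by
    rw [← ENNReal.mul_rpow_of_nonneg _ _ hq.le]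
    gcongr
    refine (enorm_sub_le (E := E)).trans ?_
    rw [two_mul]
    gcongr <;> simpa [enorm_le_iff_norm_le]
  by_cases hbig : ‖x‖ ≤ R ∧ ‖y‖ ≤ R
  · refine le_trans ?_ le_self_add
    by_cases h : P
    · refine le_trans ?_ le_add_self
      rw [if_pos h, mul_one, ← ofReal_norm]
      gcongr
      exact (norm_sub_le x y).trans (by linarith [hbig.1, hbig.2])
    · refine le_trans ?_ le_self_add
      rw [← ofReal_norm]
      gcongr
      exact hP h hbig.1
  · refine le_trans ?_ le_add_self
    rw [mul_assoc]
    rcases le_total ‖x‖ ‖y‖ with hxy | hxy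
    · refine (hmax y hxy le_rfl).trans ?_
      gcongr
      refine (htail y (not_le.1 fun h => hbig ⟨hxy.trans h, h⟩)).trans ?_
      gcongr
      exact le_add_self
    · refine (hmax x le_rfl hxy).trans ?_
      gcongr
      refine (htail x (not_le.1 fun h => hbig ⟨h, hxy.trans h⟩)).trans ?_
      gcongr
      exact le_self_add

lemma eventually_exists_coupling_lintegral_le {E : Type*} [NormedAddCommGroup E]
    [ProperSpace E] [MeasurableSpace E] [BorelSpace E] [SecondCountableTopology E] {q p : ℝ}
    (hq : 0 < q) (hqp : q < p) {M : ℝ≥0∞} (hM : M ≠ ∞) {μs : ℕ → ProbabilityMeasure E}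
    {μ : ProbabilityMeasure E} (hlim : Tendsto μs atTop (𝓝 μ))
    (hμs : ∀ n, ∫⁻ x, ‖x‖ₑ ^ p ∂(μs n : Measure E) ≤ M)
    (hμ : ∫⁻ x, ‖x‖ₑ ^ p ∂(μ : Measure E) ≤ M) {ε : ℝ≥0∞} (hε : 0 < ε) :
    ∀ᶠ n in atTop, ∃ π : Measure (E × E), π.map Prod.fst = μs n ∧ π.map Prod.snd = μ ∧
      ∫⁻ z, ‖z.1 - z.2‖ₑ ^ q ∂π ≤ ε := by
  classical
  have hε3 : 0 < ε / 3 := ENNReal.div_pos hε.ne' (by simp)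
  obtain ⟨η, hη, hη0⟩ : ∃ η : ℝ, ENNReal.ofReal η ^ q < ε / 3 ∧ 0 < η := by
    have h : Tendsto (fun η : ℝ => ENNReal.ofReal η ^ q) (𝓝[>] 0) (𝓝 0) := by
      have := ((ENNReal.continuous_rpow_const (y := q)).comp ENNReal.continuous_ofReal).tendsto 0
      simp only [Function.comp_def, ENNReal.ofReal_zero, ENNReal.zero_rpow_of_pos hq] at this
      exact this.mono_left nhdsWithin_le_nhds
    exact ((h.eventually (gt_mem_nhds hε3)).and self_mem_nhdsWithin).exists
  obtain ⟨R, hR, hR0⟩ : ∃ R : ℝ,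
      2 ^ q * (ENNReal.ofReal R ^ (p - q))⁻¹ * (M + M) < ε / 3 ∧ 0 < R := by
    have h : Tendsto (fun R : ℝ => 2 ^ q * (ENNReal.ofReal R ^ (p - q))⁻¹ * (M + M)) atTop
        (𝓝 0) := by
      have h1 := _root_.tendsto_inv_iff.2 ((ENNReal.tendsto_rpow_at_top (sub_pos.2 hqp)).comp
        ENNReal.tendsto_ofReal_atTop)
      have h2 := ENNReal.Tendsto.mul_const (ENNReal.Tendsto.const_mul (a := 2 ^ q) h1
        (Or.inr (by finiteness))) (b := M + M) (Or.inr (by finiteness))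
      simpa using h2
    exact ((h.eventually (gt_mem_nhds hε3)).and (eventually_gt_atTop 0)).exists
  obtain ⟨t, T, hTm, hTν, hT⟩ := exists_finite_partition_null_frontier (μ : Measure E) R hη0
  have hD : Tendsto (fun n => ENNReal.ofReal (2 * R) ^ q * ∑ s, ((μs n : Measure E) (T ⁻¹' {s}) -
      (μ : Measure E) (T ⁻¹' {s}))) atTop (𝓝 0) := by
    have h1 (s : Set t) : Tendsto (fun n => (μs n : Measure E) (T ⁻¹' {s}) -
        (μ : Measure E) (T ⁻¹' {s})) atTop (𝓝 0) := by
      simpa using ENNReal.Tendsto.sub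
        (ProbabilityMeasure.tendsto_measure_of_null_frontier_of_tendsto' hlim (hTν s))
        (tendsto_const_nhds (x := (μ : Measure E) (T ⁻¹' {s}))) (Or.inl (by finiteness))
    have h2 := ENNReal.Tendsto.const_mul (a := ENNReal.ofReal (2 * R) ^ q)
      (tendsto_finsetSum Finset.univ fun s _ => h1 s) (Or.inr (by finiteness))
    simpa using h2
  filter_upwards [hD.eventually (gt_mem_nhds hε3)] with n hn
  obtain ⟨π, hfst, hsnd, hπ⟩ :=
    exists_coupling_measure_ne_le (μs n : Measure E) (μ : Measure E) T hTm
  refine ⟨π, hfst, hsnd, ?_⟩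
  have hπ1 : π univ = 1 := by
    rw [← preimage_univ (f := Prod.fst), ← Measure.map_apply measurable_fst .univ, hfst]
    exact measure_univ
  have hDm : MeasurableSet {z : E × E | T z.1 ≠ T z.2} := by
    have heq : {z : E × E | T z.1 ≠ T z.2} = ⋃ s, (T ⁻¹' {s}) ×ˢ (T ⁻¹' {s})ᶜ := by
      ext z
      simp [eq_comm]
    rw [heq]
    exact MeasurableSet.iUnion fun s => (hTm s).prod (hTm s).compl
  calc ∫⁻ z, ‖z.1 - z.2‖ₑ ^ q ∂π
      ≤ ∫⁻ z, ENNReal.ofReal η ^ q +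
          ENNReal.ofReal (2 * R) ^ q * {z : E × E | T z.1 ≠ T z.2}.indicator 1 z +
          2 ^ q * (ENNReal.ofReal R ^ (p - q))⁻¹ * (‖z.1‖ₑ ^ p + ‖z.2‖ₑ ^ p) ∂π :=
        lintegral_mono fun z => by
          simpa [indicator_apply] using enorm_sub_rpow_le hq hqp hR0 z.1 z.2 (T z.1 ≠ T z.2)
            fun h hz => hT _ _ hz (not_not.1 h)
    _ = ENNReal.ofReal η ^ q + ENNReal.ofReal (2 * R) ^ q * π {z | T z.1 ≠ T z.2} +
          2 ^ q * (ENNReal.ofReal R ^ (p - q))⁻¹ *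
            (∫⁻ x, ‖x‖ₑ ^ p ∂(μs n : Measure E) + ∫⁻ x, ‖x‖ₑ ^ p ∂(μ : Measure E)) := by
        have hind : Measurable ({z : E × E | T z.1 ≠ T z.2}.indicator (1 : E × E → ℝ≥0∞)) :=
          measurable_one.indicator hDm
        rw [lintegral_add_left (by fun_prop), lintegral_add_left (by fun_prop),
          lintegral_const, hπ1, mul_one, lintegral_const_mul _ hind, lintegral_indicator_one hDm,
          lintegral_const_mul _ (by fun_prop), lintegral_add_left (by fun_prop), ← hfst, ← hsnd,
          lintegral_map (by fun_prop) measurable_fst, lintegral_map (by fun_prop) measurable_snd]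
    _ ≤ ε / 3 + ε / 3 + ε / 3 := by
        gcongr
        · exact (mul_le_mul_right hπ _).trans hn.le
        · refine le_trans ?_ hR.le
          gcongr
          exact hμs n
    _ = ε := ENNReal.add_thirds ε

lemma lintegral_enorm_rpow_le_of_coupling {E : Type*} [NormedAddCommGroup E]
    [MeasurableSpace E] [BorelSpace E] [SecondCountableTopology E] {p : ℝ} (hp : 1 ≤ p)
    {C K : ℝ≥0∞} {N : E → ℝ≥0∞} (hN : Measurable N) (hNC : ∀ x, ‖x‖ₑ ≤ C * N x)
    {μ ν : Measure E} {π : Measure (E × E)} (hfst : π.map Prod.fst = μ)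
    (hsnd : π.map Prod.snd = ν) (hπ : ∫⁻ z, N (z.1 - z.2) ^ p ∂π ≤ K) :
    ∫⁻ x, ‖x‖ₑ ^ p ∂ν ≤ 2 ^ (p - 1) * (∫⁻ x, ‖x‖ₑ ^ p ∂μ + C ^ p * K) := by
  have hp0 : 0 ≤ p := zero_le_one.trans hp
  calc ∫⁻ x, ‖x‖ₑ ^ p ∂ν = ∫⁻ z, ‖z.2‖ₑ ^ p ∂π := by
        rw [← hsnd, lintegral_map (by fun_prop) measurable_snd]
    _ ≤ ∫⁻ z, 2 ^ (p - 1) * (‖z.1‖ₑ ^ p + C ^ p * N (z.1 - z.2) ^ p) ∂π := by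
        refine lintegral_mono fun z => ?_
        refine le_trans ?_ ((ENNReal.rpow_add_le_mul_rpow_add_rpow ‖z.1‖ₑ (C * N (z.1 - z.2))
          hp).trans_eq (by rw [ENNReal.mul_rpow_of_nonneg _ _ hp0]))
        gcongr
        calc ‖z.2‖ₑ = ‖z.1 - (z.1 - z.2)‖ₑ := by rw [sub_sub_cancel]
          _ ≤ ‖z.1‖ₑ + ‖z.1 - z.2‖ₑ := enorm_sub_le
          _ ≤ _ := by gcongr; exact hNC _
    _ = 2 ^ (p - 1) * (∫⁻ x, ‖x‖ₑ ^ p ∂μ + C ^ p * ∫⁻ z, N (z.1 - z.2) ^ p ∂π) := by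
        rw [lintegral_const_mul _ (by fun_prop), lintegral_add_left (by fun_prop),
          lintegral_const_mul _ (by fun_prop), ← hfst,
          lintegral_map (by fun_prop) measurable_fst]
    _ ≤ _ := by gcongr

/-- Compactness of the `p`-Wasserstein ball in the `q`-Wasserstein distance, `1 ≤ q < p`:
every sequence in the ball has a subsequence converging (in `W_q` w.r.t. the Euclidean
norm) to an element of the ball. -/
theorem stmt7 {d : ℕ} (q p c δ : ℝ) (hq : 1 ≤ q) (hqp : q < p) (hc : 0 < c) (hδ : 0 ≤ δ)
    (S : Set (EuclideanSpace ℝ (Fin d))) (hS : IsClosed S)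
    (μ : Measure (EuclideanSpace ℝ (Fin d))) [IsProbabilityMeasure μ] (hμS : μ S = 1)
    (hmom : Integrable (fun x => ‖x‖ ^ p) μ)
    (N : EuclideanSpace ℝ (Fin d) → ℝ≥0∞) (hN : LowerSemicontinuous N)
    (hNc : ∀ x : EuclideanSpace ℝ (Fin d), ENNReal.ofReal ‖x‖ ≤ ENNReal.ofReal c * N x)
    (ν : ℕ → Measure (EuclideanSpace ℝ (Fin d)))
    (hν : ∀ n, IsProbabilityMeasure (ν n))
    (hνball : ∀ n, WpCost N p μ (ν n) ≤ ENNReal.ofReal δ) :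
    ∃ φ : ℕ → ℕ, StrictMono φ ∧
      ∃ νlim : Measure (EuclideanSpace ℝ (Fin d)), IsProbabilityMeasure νlim ∧
        WpCost N p μ νlim ≤ ENNReal.ofReal δ ∧
        Tendsto (fun n => WpEucl q (ν (φ n)) νlim) atTop (nhds 0) := by
  have hq0 : 0 < q := one_pos.trans_le hq
  have hp1 : 1 ≤ p := hq.trans hqp.le
  have hp0 : 0 < p := one_pos.trans_le hp1
  have hM : ∫⁻ x, ‖x‖ₑ ^ p ∂μ ≠ ∞ := by
    refine ne_of_eq_of_ne (lintegral_congr fun x => ?_) hmom.2.ne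
    rw [Real.enorm_rpow_of_nonneg (norm_nonneg x) hp0.le, enorm_norm]
  have hNC (x : EuclideanSpace ℝ (Fin d)) : ‖x‖ₑ ≤ ENNReal.ofReal c * N x :=
    (ofReal_norm x).symm.trans_le (hNc x)
  have hcoup (n : ℕ) : ∃ π : Measure (EuclideanSpace ℝ (Fin d) × EuclideanSpace ℝ (Fin d)),
      π.map Prod.fst = μ ∧ π.map Prod.snd = ν n ∧
        ∫⁻ z, N (z.1 - z.2) ^ p ∂π ≤ (ENNReal.ofReal δ + (n + 1 : ℝ≥0∞)⁻¹) ^ p := by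
    have hlt : WpCost N p μ (ν n) < ENNReal.ofReal δ + (n + 1 : ℝ≥0∞)⁻¹ :=
      (hνball n).trans_lt (ENNReal.lt_add_right (by finiteness) (by simp [ENNReal.add_eq_top]))
    obtain ⟨π, ⟨hfst, hsnd⟩, hπ⟩ := by simpa only [WpCost, iInf_lt_iff, exists_prop] using hlt
    refine ⟨π, hfst, hsnd, ?_⟩
    rw [one_div] at hπ
    exact (ENNReal.rpow_inv_le_iff hp0).1 hπ.le
  choose π hfst hsnd hcost using hcoup
  have hπprob (n : ℕ) : IsProbabilityMeasure (π n) := by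
    have : IsProbabilityMeasure ((π n).map Prod.fst) := by rwa [hfst n]
    exact Measure.isProbabilityMeasure_of_map Prod.fst
  set M : ℝ≥0∞ := 2 ^ (p - 1) *
    (∫⁻ x, ‖x‖ₑ ^ p ∂μ + ENNReal.ofReal c ^ p * (ENNReal.ofReal δ + 1) ^ p)
  have hMtop : M ≠ ∞ := by finiteness
  have hbound (κ : Measure (EuclideanSpace ℝ (Fin d))) (π' : Measure (_ × _))
      (hf : π'.map Prod.fst = μ) (hs : π'.map Prod.snd = κ)
      (hπ' : ∫⁻ z, N (z.1 - z.2) ^ p ∂π' ≤ (ENNReal.ofReal δ + 1) ^ p) :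
      ∫⁻ x, ‖x‖ₑ ^ p ∂κ ≤ M :=
    lintegral_enorm_rpow_le_of_coupling hp1 hN.measurable hNC hf hs hπ'
  have hνM (n : ℕ) : ∫⁻ x, ‖x‖ₑ ^ p ∂(ν n) ≤ M := by
    refine hbound _ _ (hfst n) (hsnd n) ((hcost n).trans ?_)
    gcongr
    simp
  let πs (n : ℕ) : ProbabilityMeasure
      (EuclideanSpace ℝ (Fin d) × EuclideanSpace ℝ (Fin d)) := ⟨π n, hπprob n⟩
  have htight : IsTightMeasureSet (ProbabilityMeasure.toMeasure '' range πs) := by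
    refine IsTightMeasureSet.prodMk ?_ ?_
    · refine (isTightMeasureSet_singleton (μ := μ)).subset ?_
      rintro _ ⟨_, ⟨_, ⟨n, rfl⟩, rfl⟩, rfl⟩
      exact hfst n
    · refine (isTightMeasureSet_of_lintegral_enorm_rpow_le hp0 hMtop (A := range ν) ?_).subset ?_
      · rintro _ ⟨n, rfl⟩
        exact hνM n
      · rintro _ ⟨_, ⟨_, ⟨n, rfl⟩, rfl⟩, rfl⟩
        exact ⟨n, (hsnd n).symm⟩
  obtain ⟨πlim, -, φ, hφ, hlim⟩ := (isCompact_closure_of_isTightMeasureSet htight).isSeqCompact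
    fun n => subset_closure (mem_range_self (f := πs) n)
  have hfst_lim : πlim.toMeasure.map Prod.fst = μ := by
    have h := ProbabilityMeasure.tendsto_map_of_tendsto_of_continuous (πs ∘ φ) πlim hlim
      continuous_fst
    have hconst (n : ℕ) : ((πs ∘ φ) n).map (f := Prod.fst) continuous_fst.aemeasurable =
        (⟨μ, inferInstance⟩ : ProbabilityMeasure (EuclideanSpace ℝ (Fin d))) :=
      Subtype.ext (hfst (φ n))
    simp only [hconst] at h
    exact congrArg ProbabilityMeasure.toMeasure (tendsto_nhds_unique h tendsto_const_nhds)
  set νlim := πlim.map (f := Prod.snd) continuous_snd.aemeasurable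
  let νs (n : ℕ) : ProbabilityMeasure (EuclideanSpace ℝ (Fin d)) := ⟨ν n, hν n⟩
  have hweak : Tendsto (fun n => νs (φ n)) atTop (𝓝 νlim) := by
    have h := ProbabilityMeasure.tendsto_map_of_tendsto_of_continuous (πs ∘ φ) πlim hlim
      continuous_snd
    exact h.congr fun n => Subtype.ext (hsnd (φ n))
  have hsnd_lim : πlim.toMeasure.map Prod.snd = νlim := rfl
  have hcost_lim : ∫⁻ z, N (z.1 - z.2) ^ p ∂πlim.toMeasure ≤ ENNReal.ofReal δ ^ p := by
    have hlsc : LowerSemicontinuous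
        fun z : EuclideanSpace ℝ (Fin d) × EuclideanSpace ℝ (Fin d) => N (z.1 - z.2) ^ p :=
      (ENNReal.continuous_rpow_const (y := p)).comp_lowerSemicontinuous
        (hN.comp (continuous_fst.sub continuous_snd)) (ENNReal.monotone_rpow_of_nonneg hp0.le)
    have hupper : Tendsto (fun n => (ENNReal.ofReal δ + (φ n + 1 : ℝ≥0∞)⁻¹) ^ p) atTop
        (𝓝 (ENNReal.ofReal δ ^ p)) := by
      have h1 : Tendsto (fun n : ℕ => (n + 1 : ℝ≥0∞)⁻¹) atTop (𝓝 0) := by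
        have h := (tendsto_add_atTop_iff_nat 1).2 ENNReal.tendsto_inv_nat_nhds_zero
        simpa using h
      have h2 := (tendsto_const_nhds (x := ENNReal.ofReal δ)).add (h1.comp hφ.tendsto_atTop)
      rw [add_zero] at h2
      exact ((ENNReal.continuous_rpow_const (y := p)).tendsto _).comp h2
    calc ∫⁻ z, N (z.1 - z.2) ^ p ∂πlim.toMeasure
        ≤ liminf (fun n => ∫⁻ z, N (z.1 - z.2) ^ p ∂(π (φ n))) atTop :=
          lintegral_le_liminf_lintegral_of_lowerSemicontinuous hlim hlsc
      _ ≤ liminf (fun n => (ENNReal.ofReal δ + (φ n + 1 : ℝ≥0∞)⁻¹) ^ p) atTop :=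
          liminf_le_liminf (Eventually.of_forall fun n => hcost (φ n))
      _ = ENNReal.ofReal δ ^ p := hupper.liminf_eq
  refine ⟨φ, hφ, νlim, inferInstance, ?_, ?_⟩
  · refine (iInf₂_le πlim.toMeasure ⟨hfst_lim, hsnd_lim⟩).trans ?_
    rw [one_div]
    exact (ENNReal.rpow_inv_le_iff hp0).2 hcost_lim
  · have hνlimM : ∫⁻ x, ‖x‖ₑ ^ p ∂(νlim : Measure (EuclideanSpace ℝ (Fin d))) ≤ M :=
      hbound _ _ hfst_lim hsnd_lim (hcost_lim.trans (by gcongr; exact le_self_add))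
    refine ENNReal.tendsto_nhds_zero.2 fun ε hε => ?_
    have hεq : 0 < ε ^ q := by
      rcases eq_or_ne ε ∞ with rfl | h
      · simp [hq0]
      · exact ENNReal.rpow_pos hε h
    filter_upwards [eventually_exists_coupling_lintegral_le hq0 hqp hMtop hweak
      (fun n => hνM (φ n)) hνlimM hεq] with n ⟨π', hf, hs, hπ'⟩
    refine (iInf₂_le π' ⟨hf, hs⟩).trans ?_
    rw [one_div, ENNReal.rpow_inv_le_iff hq0]
    refine (lintegral_congr fun z => ?_).trans_le hπ'
    rw [← ENNReal.ofReal_rpow_of_nonneg (norm_nonneg _) hq0.le, ofReal_norm]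
end

section
/- Let p ∈ (1,∞), q = p/(p−1), μ a probability measure on ℝ^d with finite p-th moment, and let f : ℝ^d → ℝ be differentiable with ∇f continuous and |∇f(x)| ≤ c(1+|x|^{p−1}) for all x. Define V(δ) = sup{∫ f dν : W_p(μ,ν) ≤ δ} with W_p taken w.r.t. the Euclidean norm. Then lim_{δ→0} (V(δ) − V(0))/δ = (∫ |∇f(x)|^q μ(dx))^{1/q}. -/
open Set MeasureTheory Filter Topology
open scoped ENNReal RealInnerProductSpace

/-- The `p`-Wasserstein distance on `ℝ^d` with respect to the Euclidean norm. -/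
noncomputable def Wp {d : ℕ} (p : ℝ)
    (μ ν : Measure (EuclideanSpace ℝ (Fin d))) : ℝ≥0∞ :=
  ⨅ π ∈ {π : Measure (EuclideanSpace ℝ (Fin d) × EuclideanSpace ℝ (Fin d)) |
      π.map Prod.fst = μ ∧ π.map Prod.snd = ν},
    (∫⁻ z, ENNReal.ofReal (‖z.1 - z.2‖ ^ p) ∂π) ^ (1 / p)

section Taylor

variable {E : Type*} [NormedAddCommGroup E] [InnerProductSpace ℝ E] [FiniteDimensional ℝ E]

theorem add_rpow_le_two_rpow_mul {a s t : ℝ} (ha : 0 ≤ a) (hs : 0 ≤ s) (ht : 0 ≤ t) :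
    (s + t) ^ a ≤ 2 ^ a * (s ^ a + t ^ a) := by
  have hs' := Real.rpow_nonneg hs a
  have ht' := Real.rpow_nonneg ht a
  have h : s + t ≤ 2 * max s t := by linarith [le_max_left s t, le_max_right s t]
  calc (s + t) ^ a ≤ (2 * max s t) ^ a := Real.rpow_le_rpow (by positivity) h ha
    _ = 2 ^ a * max s t ^ a := Real.mul_rpow (by norm_num) (le_max_of_le_left hs)
    _ ≤ 2 ^ a * (s ^ a + t ^ a) := by
      gcongr
      rcases max_cases s t with ⟨h, -⟩ | ⟨h, -⟩ <;> rw [h] <;> linarith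

/-- First-order Taylor estimate from a bound on the oscillation of the gradient. -/
theorem abs_sub_sub_inner_gradient_le {f : E → ℝ} (hf : Differentiable ℝ f) {x y : E} {C : ℝ}
    (h : ∀ z ∈ segment ℝ x y, ‖gradient f z - gradient f x‖ ≤ C) :
    |f y - f x - ⟪gradient f x, y - x⟫| ≤ C * ‖y - x‖ := by
  have key := (convex_segment (𝕜 := ℝ) x y).norm_image_sub_le_of_norm_fderiv_le' (𝕜 := ℝ)
    (f := f) (φ := fderiv ℝ f x) (C := C) (fun z _ => hf z) (fun z hz => ?_)
    (left_mem_segment ℝ x y) (right_mem_segment ℝ x y)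
  · simpa [gradient] using key
  · have := h z hz
    rwa [gradient, gradient, ← map_sub, LinearIsometryEquiv.norm_map] at this

/-- If the gradient grows at most like `1 + ‖x‖ ^ a`, then its oscillation on segments starting in a
ball is, up to a multiple of `‖y - x‖ ^ a`, as small as desired; elsewhere it is controlled by the
growth bound. -/
theorem exists_gradient_oscillation_le {f : E → ℝ} (hgrad : Continuous fun x => gradient f x)
    {a c : ℝ} (ha : 0 < a) (hc : 0 ≤ c) (hb : ∀ x, ‖gradient f x‖ ≤ c * (1 + ‖x‖ ^ a))
    {η : ℝ} (hη : 0 < η) {R : ℝ} (hR : 0 ≤ R) :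
    ∃ K, 0 ≤ K ∧ ∀ x y : E, ∀ z ∈ segment ℝ x y, ‖gradient f z - gradient f x‖ ≤
      (if ‖x‖ ≤ R then η else c * (2 + 2 ^ a) * (1 + ‖x‖ ^ a)) + K * ‖y - x‖ ^ a := by
  have hcont : UniformContinuousOn (fun x => gradient f x) (Metric.closedBall 0 (R + 1)) :=
    (isCompact_closedBall 0 (R + 1)).uniformContinuousOn_of_continuous hgrad.continuousOn
  obtain ⟨r, hr, hunif⟩ := Metric.uniformContinuousOn_iff_le.1 hcont η hη
  set r' := min r 1 with hr'
  have hr'0 : 0 < r' := by positivity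
  set C := c * (2 + 2 ^ a) with hC
  have hC0 : 0 ≤ C := by positivity
  refine ⟨C * ((1 + R ^ a) / r' ^ a + 1), by positivity, fun x y z hz => ?_⟩
  have hzx := norm_sub_le_of_mem_segment hz
  have hgrow : ‖gradient f z - gradient f x‖ ≤ C * (1 + ‖x‖ ^ a) + C * ‖y - x‖ ^ a := by
    have h1 : ‖z‖ ^ a ≤ 2 ^ a * (‖x‖ ^ a + ‖y - x‖ ^ a) :=
      (Real.rpow_le_rpow (norm_nonneg z) (by
        calc ‖z‖ = ‖x + (z - x)‖ := by simp
          _ ≤ ‖x‖ + ‖y - x‖ := (norm_add_le _ _).trans (by gcongr)) ha.le).trans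
        (add_rpow_le_two_rpow_mul ha.le (norm_nonneg _) (norm_nonneg _))
    have hx0 : 0 ≤ ‖x‖ ^ a := by positivity
    have hy0 : 0 ≤ ‖y - x‖ ^ a := by positivity
    have h20 : (0 : ℝ) ≤ 2 ^ a := by positivity
    calc ‖gradient f z - gradient f x‖ ≤ c * (1 + ‖z‖ ^ a) + c * (1 + ‖x‖ ^ a) :=
          (norm_sub_le _ _).trans (add_le_add (hb z) (hb x))
      _ = c * (2 + ‖z‖ ^ a + ‖x‖ ^ a) := by ring
      _ ≤ c * ((2 + 2 ^ a) * (1 + ‖x‖ ^ a + ‖y - x‖ ^ a)) := by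
        gcongr
        nlinarith
      _ = _ := by rw [hC]; ring
  have hy0 : 0 ≤ ‖y - x‖ ^ a := by positivity
  have hq0 : 0 ≤ (1 + R ^ a) / r' ^ a := by positivity
  split_ifs with hx
  · by_cases hy : ‖y - x‖ ≤ r'
    · have h1 : x ∈ Metric.closedBall (0 : E) (R + 1) := by
        rw [mem_closedBall_zero_iff]; linarith
      have h2 : z ∈ Metric.closedBall (0 : E) (R + 1) := by
        rw [mem_closedBall_zero_iff]
        calc ‖z‖ = ‖x + (z - x)‖ := by simp
          _ ≤ ‖x‖ + ‖z - x‖ := norm_add_le _ _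
          _ ≤ R + 1 := add_le_add hx ((hzx.trans hy).trans (min_le_right _ _))
      have := hunif z h2 x h1 (by
        rw [dist_eq_norm]; exact (hzx.trans hy).trans (min_le_left _ _))
      rw [dist_eq_norm] at this
      exact this.trans (le_add_of_nonneg_right (by positivity))
    · have h1 : r' ^ a ≤ ‖y - x‖ ^ a := Real.rpow_le_rpow hr'0.le (not_le.1 hy).le ha.le
      have h2 : 1 + R ^ a ≤ (1 + R ^ a) / r' ^ a * ‖y - x‖ ^ a := by
        rw [div_mul_eq_mul_div, le_div_iff₀ (by positivity)]
        gcongr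
      calc _ ≤ C * (1 + ‖x‖ ^ a) + C * ‖y - x‖ ^ a := hgrow
        _ ≤ C * (1 + R ^ a) + C * ‖y - x‖ ^ a := by gcongr
        _ ≤ C * ((1 + R ^ a) / r' ^ a * ‖y - x‖ ^ a) + C * ‖y - x‖ ^ a := by gcongr
        _ = C * ((1 + R ^ a) / r' ^ a + 1) * ‖y - x‖ ^ a := by ring
        _ ≤ _ := by linarith
  · refine hgrow.trans ?_
    gcongr
    exact le_mul_of_one_le_right hC0 (by linarith)

end Taylor

section Remainder

variable {E : Type*} [NormedAddCommGroup E] [MeasurableSpace E] [BorelSpace E]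

theorem memLp_one_add_norm_rpow {p q : ℝ} (hpq : p.HolderConjugate q) {μ : Measure E}
    [IsFiniteMeasure μ] (hμ : Integrable (fun x => ‖x‖ ^ p) μ) (C : ℝ) :
    MemLp (fun x => C * (1 + ‖x‖ ^ (p - 1))) (ENNReal.ofReal q) μ := by
  have hq0 : ENNReal.ofReal q ≠ 0 := by simpa using hpq.symm.pos
  have hm : AEStronglyMeasurable (fun x : E => ‖x‖ ^ (p - 1)) μ :=
    (continuous_norm.rpow_const fun _ => .inr hpq.sub_one_pos.le).aestronglyMeasurable
  have : MemLp (fun x : E => ‖x‖ ^ (p - 1)) (ENNReal.ofReal q) μ := by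
    rw [← integrable_norm_rpow_iff hm hq0 ENNReal.ofReal_ne_top,
      ENNReal.toReal_ofReal hpq.symm.nonneg]
    refine hμ.congr (.of_forall fun x => ?_)
    dsimp only
    rw [Real.norm_of_nonneg (by positivity), ← Real.rpow_mul (norm_nonneg x), hpq.sub_one_mul_conj]
  exact ((memLp_const (1 : ℝ)).add this).const_mul C

theorem rpow_integral_rpow_eq_lpNorm {α : Type*} [MeasurableSpace α] {μ : Measure α} {g : α → ℝ}
    (hg : 0 ≤ g) {q : ℝ} (hq : 0 < q) (hgm : AEStronglyMeasurable g μ) :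
    (∫ x, g x ^ q ∂μ) ^ (1 / q) = lpNorm g (ENNReal.ofReal q) μ := by
  rw [lpNorm_eq_integral_norm_rpow_toReal (by simpa using hq) ENNReal.ofReal_ne_top hgm,
    ENNReal.toReal_ofReal hq.le, one_div]
  simp only [Real.norm_of_nonneg (hg _)]

/-- The `L^q` norm of a continuous function tending to infinity is small outside a large ball. -/
theorem exists_lpNorm_indicator_norm_gt_le {h : E → ℝ} (hh : Continuous h) {q : ℝ≥0∞}
    {μ : Measure E} (hmem : MemLp h q μ) (htop : Tendsto h (Bornology.cobounded E) atTop)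
    {η : ℝ} (hη : 0 < η) :
    ∃ R, 0 ≤ R ∧ lpNorm ({x | R < ‖x‖}.indicator h) q μ ≤ η := by
  obtain ⟨M, hM⟩ := hmem.eLpNorm_indicator_norm_ge_le hh.stronglyMeasurable hη
  obtain ⟨R, -, hR⟩ := (Filter.hasBasis_cobounded_norm.eventually_iff).1 (htop.eventually_ge_atTop M)
  have hS : MeasurableSet {x : E | max R 0 < ‖x‖} := measurableSet_lt measurable_const measurable_norm
  refine ⟨max R 0, le_max_right _ _, ?_⟩
  rw [← toReal_eLpNorm (hmem.indicator hS).1]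
  refine ENNReal.toReal_le_of_le_ofReal hη.le (le_trans (eLpNorm_mono fun x => ?_) hM)
  refine norm_indicator_le_of_subset (fun x hx => ?_) h x
  exact (hR (show R ≤ ‖x‖ from (le_max_left _ _).trans (le_of_lt hx))).trans (Real.le_norm_self _)

variable [InnerProductSpace ℝ E] [FiniteDimensional ℝ E]

/-- Under the growth condition dual to the `p`-th moment of `μ`, the first-order Taylor remainder
of `f` is bounded by `g x * ‖y - x‖ + K * ‖y - x‖ ^ p` with `g` small in `L^q(μ)`. -/
theorem exists_taylor_remainder_le {p q : ℝ} (hpq : p.HolderConjugate q) {μ : Measure E}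
    [IsProbabilityMeasure μ] (hμ : Integrable (fun x => ‖x‖ ^ p) μ)
    {f : E → ℝ} (hf : Differentiable ℝ f) (hgrad : Continuous fun x => gradient f x)
    {c : ℝ} (hc : 0 < c) (hb : ∀ x, ‖gradient f x‖ ≤ c * (1 + ‖x‖ ^ (p - 1)))
    {η : ℝ} (hη : 0 < η) :
    ∃ (g : E → ℝ) (K : ℝ), 0 ≤ g ∧ MemLp g (ENNReal.ofReal q) μ ∧
      (∫ x, g x ^ q ∂μ) ^ (1 / q) ≤ η ∧ 0 ≤ K ∧
      ∀ x y, |f y - f x - ⟪gradient f x, y - x⟫| ≤ g x * ‖y - x‖ + K * ‖y - x‖ ^ p := by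
  have ha : 0 < p - 1 := hpq.sub_one_pos
  have hq0 : ENNReal.ofReal q ≠ 0 := by simpa using hpq.symm.pos
  have hq1 : 1 ≤ ENNReal.ofReal q := by simpa using hpq.symm.lt.le
  have hC0 : 0 < c * (2 + 2 ^ (p - 1)) := by positivity
  obtain ⟨h, hh⟩ : ∃ h : E → ℝ, ∀ x, h x = c * (2 + 2 ^ (p - 1)) * (1 + ‖x‖ ^ (p - 1)) :=
    ⟨_, fun _ => rfl⟩
  have hh0 : 0 ≤ h := fun x => by rw [hh, Pi.zero_apply]; positivity
  have hmem : MemLp h (ENNReal.ofReal q) μ := by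
    rw [funext hh]; exact memLp_one_add_norm_rpow hpq hμ _
  have hcont : Continuous h := by
    rw [funext hh]
    exact continuous_const.mul (continuous_const.add
      (continuous_norm.rpow_const fun _ => .inr ha.le))
  have htop : Tendsto h (Bornology.cobounded E) atTop := by
    rw [funext hh]
    exact (tendsto_atTop_add_const_left _ _
      ((tendsto_rpow_atTop ha).comp tendsto_norm_cobounded_atTop)).const_mul_atTop hC0
  obtain ⟨R, hR0, hR⟩ := exists_lpNorm_indicator_norm_gt_le hcont hmem htop (half_pos hη)
  have hS : MeasurableSet {x : E | R < ‖x‖} := measurableSet_lt measurable_const measurable_norm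
  obtain ⟨K, hK, hosc⟩ := exists_gradient_oscillation_le hgrad ha hc.le hb (half_pos hη) hR0
  have hind := hmem.indicator hS
  have hi0 : 0 ≤ {x : E | R < ‖x‖}.indicator h := indicator_nonneg fun x _ => hh0 x
  have hg0 : (0 : E → ℝ) ≤ fun x => η / 2 + {x : E | R < ‖x‖}.indicator h x := by
    intro x
    exact add_nonneg (half_pos hη).le (hi0 x)
  have hg : MemLp (fun x => η / 2 + {x : E | R < ‖x‖}.indicator h x) (ENNReal.ofReal q) μ :=
    (memLp_const (η / 2)).add hind
  refine ⟨_, K, hg0, hg, ?_, hK, fun x y => ?_⟩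
  · rw [rpow_integral_rpow_eq_lpNorm hg0 hpq.symm.pos hg.1]
    refine (lpNorm_add_le (memLp_const _) hq1).trans ?_
    rw [lpNorm_const' hq0 ENNReal.ofReal_ne_top, Real.norm_of_nonneg (half_pos hη).le]
    simp only [probReal_univ, Real.one_rpow]
    linarith
  · have := abs_sub_sub_inner_gradient_le hf (x := x) (y := y)
      (C := η / 2 + {x : E | R < ‖x‖}.indicator h x + K * ‖y - x‖ ^ (p - 1)) fun z hz => ?_
    · refine this.trans_eq ?_
      have : ‖y - x‖ ^ p = ‖y - x‖ ^ (p - 1) * ‖y - x‖ := by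
        rw [← Real.rpow_add_one' (norm_nonneg _) (by linarith), sub_add_cancel]
      rw [this]; ring
    · refine (hosc x y z hz).trans ?_
      gcongr
      split_ifs with hx
      · exact le_add_of_nonneg_right (hi0 x)
      · rw [indicator_of_mem (show x ∈ {x : E | R < ‖x‖} from not_le.1 hx), hh]
        linarith

end Remainder

section Coupling

variable {E : Type*} [NormedAddCommGroup E] [InnerProductSpace ℝ E] [FiniteDimensional ℝ E]
  [MeasurableSpace E] [BorelSpace E]

theorem integrable_of_taylor_remainder_le {p : ℝ} (hp : 1 < p) {μ : Measure E}
    [IsFiniteMeasure μ] (hμ : Integrable (fun x => ‖x‖ ^ p) μ) {f : E → ℝ} (hf : Continuous f)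
    {v : E} {a K : ℝ} (h : ∀ y, |f y - f 0 - ⟪v, y⟫| ≤ a * ‖y‖ + K * ‖y‖ ^ p) :
    Integrable f μ := by
  have h1 : Integrable (fun x : E => ‖x‖) μ := by
    refine Integrable.mono' ((integrable_const 1).add hμ) (by fun_prop) (.of_forall fun x => ?_)
    rw [norm_norm, Pi.add_apply]
    rcases le_total ‖x‖ 1 with hx | hx
    · have : 0 ≤ ‖x‖ ^ p := by positivity
      linarith
    · have := Real.self_le_rpow_of_one_le hx hp.le
      linarith
  refine Integrable.mono' (((integrable_const |f 0|).add (h1.const_mul (‖v‖ + a))).add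
    (hμ.const_mul K)) hf.aestronglyMeasurable (.of_forall fun y => ?_)
  have hi := abs_real_inner_le_norm v y
  have e : f y = f 0 + ⟪v, y⟫ + (f y - f 0 - ⟪v, y⟫) := by ring
  simp only [Pi.add_apply]
  calc ‖f y‖ = |f 0 + ⟪v, y⟫ + (f y - f 0 - ⟪v, y⟫)| := by rw [← e, Real.norm_eq_abs]
    _ ≤ |f 0| + |⟪v, y⟫| + |f y - f 0 - ⟪v, y⟫| := abs_add_three _ _ _
    _ ≤ |f 0| + ‖v‖ * ‖y‖ + (a * ‖y‖ + K * ‖y‖ ^ p) := by gcongr; exact h y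
    _ = _ := by ring

variable {p q : ℝ} {μ : Measure E} {π : Measure (E × E)}

theorem memLp_norm_sub_of_integrable (hp : 0 < p)
    (hN : Integrable (fun z : E × E => ‖z.2 - z.1‖ ^ p) π) :
    MemLp (fun z : E × E => ‖z.2 - z.1‖) (ENNReal.ofReal p) π := by
  have hm : AEStronglyMeasurable (fun z : E × E => ‖z.2 - z.1‖) π := by fun_prop
  rw [← integrable_norm_rpow_iff hm (by simpa using hp) ENNReal.ofReal_ne_top,
    ENNReal.toReal_ofReal hp.le]
  simpa only [norm_norm] using hN

/-- Hölder's inequality along a coupling with first marginal `μ`. -/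
theorem integral_mul_norm_sub_le (hpq : p.HolderConjugate q) (hπ : π.map Prod.fst = μ)
    (hN : Integrable (fun z : E × E => ‖z.2 - z.1‖ ^ p) π)
    {g : E → ℝ} (hg0 : 0 ≤ g) (hg : MemLp g (ENNReal.ofReal q) μ) :
    Integrable (fun z : E × E => g z.1 * ‖z.2 - z.1‖) π ∧
      ∫ z, g z.1 * ‖z.2 - z.1‖ ∂π ≤
        (∫ x, g x ^ q ∂μ) ^ (1 / q) * (∫ z, ‖z.2 - z.1‖ ^ p ∂π) ^ (1 / p) := by
  have hN' := memLp_norm_sub_of_integrable hpq.pos hN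
  have hg' : MemLp (fun z : E × E => g z.1) (ENNReal.ofReal q) π := by
    rw [← hπ] at hg
    exact hg.comp_of_map measurable_fst.aemeasurable
  have hq' : (ENNReal.ofReal q).HolderTriple (ENNReal.ofReal p) 1 := by
    have := hpq.symm.ennrealOfReal
    exact this
  refine ⟨hg'.integrable_mul hN', ?_⟩
  have key := integral_mul_le_Lp_mul_Lq_of_nonneg hpq.symm (μ := π)
    (.of_forall fun z : E × E => hg0 z.1) (.of_forall fun z => norm_nonneg (z.2 - z.1)) hg' hN'
  have e : ∫ z, g z.1 ^ q ∂π = ∫ x, g x ^ q ∂μ := by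
    subst hπ
    rw [integral_map measurable_fst.aemeasurable]
    exact (hg.1.aemeasurable.pow_const q).aestronglyMeasurable
  rwa [e] at key

/-- First-order expansion of `∫ f dν - ∫ f dμ` along a coupling, given a Taylor remainder bound. -/
theorem abs_integral_sub_sub_integral_inner_le (hpq : p.HolderConjugate q)
    [IsFiniteMeasure μ] (hμ : Integrable (fun x => ‖x‖ ^ p) μ) {f : E → ℝ} (hf : Continuous f)
    (hgrad : Continuous fun x => gradient f x)
    (hgradL : MemLp (fun x => ‖gradient f x‖) (ENNReal.ofReal q) μ)
    {g : E → ℝ} {K : ℝ} (hg0 : 0 ≤ g) (hg : MemLp g (ENNReal.ofReal q) μ)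
    (h : ∀ x y, |f y - f x - ⟪gradient f x, y - x⟫| ≤ g x * ‖y - x‖ + K * ‖y - x‖ ^ p)
    (hπ : π.map Prod.fst = μ) (hN : Integrable (fun z : E × E => ‖z.2 - z.1‖ ^ p) π) :
    |∫ x, f x ∂(π.map Prod.snd) - ∫ x, f x ∂μ - ∫ z, ⟪gradient f z.1, z.2 - z.1⟫ ∂π| ≤
      (∫ x, g x ^ q ∂μ) ^ (1 / q) * (∫ z, ‖z.2 - z.1‖ ^ p ∂π) ^ (1 / p) +
        K * ∫ z, ‖z.2 - z.1‖ ^ p ∂π := by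
  have hfμ : Integrable f μ :=
    integrable_of_taylor_remainder_le hpq.lt hμ hf (v := gradient f 0) (a := g 0) (K := K)
      fun y => by simpa using h 0 y
  obtain ⟨hgi, hgle⟩ := integral_mul_norm_sub_le hpq hπ hN hg0 hg
  obtain ⟨hGi, -⟩ := integral_mul_norm_sub_le hpq hπ hN (fun _ => norm_nonneg _) hgradL
  have hf1 : Integrable (fun z : E × E => f z.1) π := by
    rw [← hπ] at hfμ; exact hfμ.comp_measurable measurable_fst
  have hin : Integrable (fun z : E × E => ⟪gradient f z.1, z.2 - z.1⟫) π :=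
    hGi.mono' (by fun_prop) (.of_forall fun z => abs_real_inner_le_norm _ _)
  have hbd : Integrable (fun z : E × E => g z.1 * ‖z.2 - z.1‖ + K * ‖z.2 - z.1‖ ^ p) π :=
    hgi.add (hN.const_mul K)
  have hrem : Integrable (fun z : E × E => f z.2 - f z.1 - ⟪gradient f z.1, z.2 - z.1⟫) π :=
    hbd.mono' (by fun_prop) (.of_forall fun z => h z.1 z.2)
  have hf2 : Integrable (fun z : E × E => f z.2) π :=
    ((hrem.add hin).add hf1).congr (.of_forall fun z => by simp)
  have e2 : ∫ x, f x ∂(π.map Prod.snd) = ∫ z, f z.2 ∂π :=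
    integral_map measurable_snd.aemeasurable hf.aestronglyMeasurable
  have e1 : ∫ x, f x ∂μ = ∫ z, f z.1 ∂π := by
    rw [← hπ]; exact integral_map measurable_fst.aemeasurable hf.aestronglyMeasurable
  rw [e1, e2, ← integral_sub hf2 hf1, ← integral_sub (by exact hf2.sub hf1) hin,
    ← Real.norm_eq_abs]
  calc _ ≤ ∫ z, g z.1 * ‖z.2 - z.1‖ + K * ‖z.2 - z.1‖ ^ p ∂π :=
        norm_integral_le_of_norm_le hbd (.of_forall fun z => h z.1 z.2)
    _ = ∫ z, g z.1 * ‖z.2 - z.1‖ ∂π + K * ∫ z, ‖z.2 - z.1‖ ^ p ∂π := by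
        rw [integral_add hgi (hN.const_mul K), integral_const_mul]
    _ ≤ _ := by gcongr

/-- Displacing `μ` in the direction `‖∇f‖ ^ (q - 2) • ∇f`, normalised in `L^p(μ)`, realises the
equality case of Hölder's inequality against `∇f`. -/
theorem exists_integral_inner_eq_of_memLp (hpq : p.HolderConjugate q) {G : E → E}
    (hG : Measurable G) (hGL : Integrable (fun x => ‖G x‖ ^ q) μ)
    (hpos : 0 < ∫ x, ‖G x‖ ^ q ∂μ) :
    ∃ T : E → E, Measurable T ∧ Integrable (fun x => ‖T x‖ ^ p) μ ∧ ∫ x, ‖T x‖ ^ p ∂μ = 1 ∧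
      ∫ x, ⟪G x, T x⟫ ∂μ = (∫ x, ‖G x‖ ^ q ∂μ) ^ (1 / q) := by
  obtain ⟨I, hI⟩ : ∃ I, I = ∫ x, ‖G x‖ ^ q ∂μ := ⟨_, rfl⟩
  rw [← hI] at hpos ⊢
  have hq1 : 0 < q - 1 := hpq.symm.sub_one_pos
  have hp0 := hpq.pos
  have hq0 := hpq.symm.pos
  have hpow : ∀ x, ‖G x‖ ^ (q - 2) * ‖G x‖ = ‖G x‖ ^ (q - 1) := fun x => by
    rw [← Real.rpow_add_one' (norm_nonneg _) (by linarith)]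
    congr 1; ring
  have hnorm : ∀ x, ‖(I ^ (-(1 / p)) * ‖G x‖ ^ (q - 2)) • G x‖ ^ p = I⁻¹ * ‖G x‖ ^ q := fun x => by
    rw [norm_smul, Real.norm_of_nonneg (by positivity), mul_assoc, hpow,
      Real.mul_rpow (by positivity) (by positivity), ← Real.rpow_mul hpos.le,
      ← Real.rpow_mul (norm_nonneg _), hpq.symm.sub_one_mul_conj, ← Real.rpow_neg_one]
    congr 2
    field_simp
  refine ⟨fun x => (I ^ (-(1 / p)) * ‖G x‖ ^ (q - 2)) • G x, by fun_prop, ?_, ?_, ?_⟩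
  · simp only [hnorm]
    exact hGL.const_mul _
  · simp only [hnorm]
    rw [integral_const_mul, ← hI, inv_mul_cancel₀ hpos.ne']
  · have : ∀ x, ⟪G x, (I ^ (-(1 / p)) * ‖G x‖ ^ (q - 2)) • G x⟫ = I ^ (-(1 / p)) * ‖G x‖ ^ q := by
      intro x
      have e : ‖G x‖ ^ (q - 1) * ‖G x‖ = ‖G x‖ ^ q := by
        rw [← Real.rpow_add_one' (norm_nonneg _) (by linarith), sub_add_cancel]
      rw [real_inner_smul_right, real_inner_self_eq_norm_sq, ← e, ← hpow]
      ring
    simp only [this]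
    rw [integral_const_mul, ← hI]
    nth_rewrite 2 [← Real.rpow_one I]
    rw [← Real.rpow_add hpos]
    congr 1
    have := hpq.inv_add_inv_eq_one
    rw [one_div, one_div]; linarith

end Coupling

section Wasserstein

variable {d : ℕ} {p : ℝ} {μ ν : Measure (EuclideanSpace ℝ (Fin d))}
  {π : Measure (EuclideanSpace ℝ (Fin d) × EuclideanSpace ℝ (Fin d))}

theorem exists_coupling_of_Wp_lt (hp : 0 < p) {s : ℝ} (hs : 0 ≤ s)
    (h : Wp p μ ν < ENNReal.ofReal s) :
    ∃ π : Measure (EuclideanSpace ℝ (Fin d) × EuclideanSpace ℝ (Fin d)),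
      π.map Prod.fst = μ ∧ π.map Prod.snd = ν ∧ Integrable (fun z => ‖z.2 - z.1‖ ^ p) π ∧
        ∫ z, ‖z.2 - z.1‖ ^ p ∂π ≤ s ^ p := by
  obtain ⟨π, hlt⟩ := iInf_lt_iff.1 h
  obtain ⟨⟨h1, h2⟩, hlt⟩ := iInf_lt_iff.1 hlt
  have hle : ∫⁻ z, ENNReal.ofReal (‖z.2 - z.1‖ ^ p) ∂π ≤ ENNReal.ofReal (s ^ p) := by
    simp only [norm_sub_rev _ (Prod.fst _)]
    rw [← ENNReal.ofReal_rpow_of_nonneg hs hp.le]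
    rw [one_div] at hlt
    exact (ENNReal.rpow_inv_le_iff hp).1 hlt.le
  have hm : AEStronglyMeasurable (fun z : EuclideanSpace ℝ (Fin d) × EuclideanSpace ℝ (Fin d) =>
      ‖z.2 - z.1‖ ^ p) π :=
    (Measurable.pow_const (by fun_prop) p).aestronglyMeasurable
  have h0 : 0 ≤ᵐ[π] fun z : EuclideanSpace ℝ (Fin d) × EuclideanSpace ℝ (Fin d) =>
      ‖z.2 - z.1‖ ^ p := .of_forall fun z => by positivity
  refine ⟨π, h1, h2, ⟨hm, ?_⟩, ?_⟩
  · exact (hasFiniteIntegral_iff_ofReal h0).2 (hle.trans_lt ENNReal.ofReal_lt_top)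
  · rw [integral_eq_lintegral_of_nonneg_ae h0 hm]
    exact ENNReal.toReal_le_of_le_ofReal (by positivity) hle

theorem Wp_le_of_coupling (hp : 0 < p) (h1 : π.map Prod.fst = μ) (h2 : π.map Prod.snd = ν)
    (hN : Integrable (fun z => ‖z.2 - z.1‖ ^ p) π) {s : ℝ} (hs : 0 ≤ s)
    (h : ∫ z, ‖z.2 - z.1‖ ^ p ∂π ≤ s ^ p) :
    Wp p μ ν ≤ ENNReal.ofReal s := by
  refine (iInf₂_le π ⟨h1, h2⟩).trans ?_
  rw [one_div, ENNReal.rpow_inv_le_iff hp, ENNReal.ofReal_rpow_of_nonneg hs hp.le]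
  simp only [norm_sub_rev (Prod.fst _)]
  rw [← ofReal_integral_eq_lintegral_ofReal hN (.of_forall fun z => by positivity)]
  exact ENNReal.ofReal_le_ofReal h

end Wasserstein

theorem tendsto_sSup_sub_div {p : ℝ} (hp : 1 < p) {S : ℝ → Set ℝ} {m L : ℝ}
    (h : ∀ η > 0, ∃ K, ∀ δ, 0 ≤ δ → (∀ r ∈ S δ, r ≤ m + (L + η) * δ + K * δ ^ p) ∧
      ∃ r ∈ S δ, m + (L - η) * δ - K * δ ^ p ≤ r) :
    Tendsto (fun δ => (sSup (S δ) - sSup (S 0)) / δ) (𝓝[>] 0) (𝓝 L) := by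
  have hV : ∀ η > 0, ∃ K, ∀ δ, 0 ≤ δ → sSup (S δ) ≤ m + (L + η) * δ + K * δ ^ p ∧
      m + (L - η) * δ - K * δ ^ p ≤ sSup (S δ) := by
    intro η hη
    obtain ⟨K, hK⟩ := h η hη
    refine ⟨K, fun δ hδ => ?_⟩
    obtain ⟨hub, r, hr, hle⟩ := hK δ hδ
    exact ⟨csSup_le ⟨r, hr⟩ hub, hle.trans (le_csSup ⟨_, hub⟩ hr)⟩
  have h0 : sSup (S 0) = m := by
    obtain ⟨K, hK⟩ := hV 1 one_pos
    have := hK 0 le_rfl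
    rw [Real.zero_rpow (by linarith)] at this
    apply le_antisymm <;> linarith [this.1, this.2]
  rw [h0, Metric.tendsto_nhds]
  intro ε hε
  obtain ⟨K, hK⟩ := hV (ε / 2) (half_pos hε)
  have hlim : Tendsto (fun δ : ℝ => K * δ ^ (p - 1)) (𝓝[>] 0) (𝓝 0) := by
    have : ContinuousAt (fun δ : ℝ => K * δ ^ (p - 1)) 0 :=
      continuousAt_const.mul (Real.continuousAt_rpow_const _ _ (.inr (by linarith)))
    have := this.tendsto.mono_left (nhdsWithin_le_nhds (s := Ioi 0))
    simpa [Real.zero_rpow (sub_pos.2 hp).ne'] using this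
  filter_upwards [hlim.eventually_lt_const (half_pos hε), self_mem_nhdsWithin] with δ hlt hδ
  have hδ : 0 < δ := hδ
  obtain ⟨hu, hl⟩ := hK δ hδ.le
  have e : δ ^ p = δ ^ (p - 1) * δ := by
    rw [← Real.rpow_add_one hδ.ne', sub_add_cancel]
  rw [e] at hu hl
  have := mul_lt_mul_of_pos_right hlt hδ
  rw [Real.dist_eq, abs_sub_lt_iff]
  constructor
  · rw [sub_lt_iff_lt_add, div_lt_iff₀ hδ]
    linarith
  · rw [sub_lt_comm, lt_div_iff₀ hδ]
    linarith

/-- First-order sensitivity of the Wasserstein distributionally robust value (no action,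
Euclidean norm): with `V(δ) = sup {∫ f dν : W_p(μ,ν) ≤ δ}`,
`lim_{δ→0⁺} (V(δ) − V(0))/δ = (∫ |∇f|^q dμ)^{1/q}` where `q = p/(p−1)`. -/
theorem stmt8 {d : ℕ} (p : ℝ) (hp : 1 < p) (q : ℝ) (hq : q = p / (p - 1))
    (μ : Measure (EuclideanSpace ℝ (Fin d))) [IsProbabilityMeasure μ]
    (hmom : Integrable (fun x => ‖x‖ ^ p) μ)
    (f : EuclideanSpace ℝ (Fin d) → ℝ) (hf : Differentiable ℝ f)
    (hgrad : Continuous fun x => gradient f x)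
    (c : ℝ) (hc : 0 < c)
    (hb : ∀ x, ‖gradient f x‖ ≤ c * (1 + ‖x‖ ^ (p - 1))) :
    Tendsto
      (fun δ : ℝ =>
        (sSup {r : ℝ | ∃ ν : Measure (EuclideanSpace ℝ (Fin d)), IsProbabilityMeasure ν ∧
            Wp p μ ν ≤ ENNReal.ofReal δ ∧ r = ∫ x, f x ∂ν}
          - sSup {r : ℝ | ∃ ν : Measure (EuclideanSpace ℝ (Fin d)), IsProbabilityMeasure ν ∧
            Wp p μ ν ≤ ENNReal.ofReal (0 : ℝ) ∧ r = ∫ x, f x ∂ν}) / δ)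
      (nhdsWithin 0 (Set.Ioi 0))
      (nhds ((∫ x, ‖gradient f x‖ ^ q ∂μ) ^ (1 / q))) := by
  have hpq : p.HolderConjugate q := (Real.holderConjugate_iff_eq_conjExponent hp).2 hq
  have hp0 := hpq.pos
  have hq0 := hpq.symm.pos
  have hgradL : MemLp (fun x => ‖gradient f x‖) (ENNReal.ofReal q) μ :=
    (memLp_one_add_norm_rpow hpq hmom c).mono' (by fun_prop)
      (.of_forall fun x => by simpa using hb x)
  obtain ⟨L, hL⟩ : ∃ L, L = (∫ x, ‖gradient f x‖ ^ q ∂μ) ^ (1 / q) := ⟨_, rfl⟩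
  have hL0 : 0 ≤ L := by rw [hL]; positivity
  rw [← hL]
  refine tendsto_sSup_sub_div hp (m := ∫ x, f x ∂μ) (S := fun δ => {r : ℝ |
    ∃ ν : Measure (EuclideanSpace ℝ (Fin d)), IsProbabilityMeasure ν ∧
      Wp p μ ν ≤ ENNReal.ofReal δ ∧ r = ∫ x, f x ∂ν}) fun η hη => ?_
  obtain ⟨g, K, hg0, hg, hgη, hK, hrem⟩ := exists_taylor_remainder_le hpq hmom hf hgrad hc hb hη
  have hexp := fun π => abs_integral_sub_sub_integral_inner_le (π := π) hpq hmom hf.continuous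
    hgrad hgradL hg0 hg hrem
  refine ⟨K, fun δ hδ => ⟨?_, ?_⟩⟩
  · rintro r ⟨ν, -, hW, rfl⟩
    have hs : ∀ s > δ, ∫ x, f x ∂ν ≤ ∫ x, f x ∂μ + (L + η) * s + K * s ^ p := by
      intro s hs
      have hs0 : 0 < s := hδ.trans_lt hs
      obtain ⟨π, h1, rfl, hN, hle⟩ := exists_coupling_of_Wp_lt hp0 hs0.le
        (hW.trans_lt ((ENNReal.ofReal_lt_ofReal_iff hs0).2 hs))
      have hs' : (∫ z, ‖z.2 - z.1‖ ^ p ∂π) ^ (1 / p) ≤ s := by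
        rw [one_div]
        exact (Real.rpow_inv_le_iff_of_pos (by positivity) hs0.le hp0).2 hle
      obtain ⟨hGi, hGle⟩ := integral_mul_norm_sub_le hpq h1 hN (fun _ => norm_nonneg _) hgradL
      rw [← hL] at hGle
      have hin : ∫ z, ⟪gradient f z.1, z.2 - z.1⟫ ∂π ≤
          ∫ z, ‖gradient f z.1‖ * ‖z.2 - z.1‖ ∂π :=
        (Real.le_norm_self _).trans (norm_integral_le_of_norm_le hGi
          (.of_forall fun z => abs_real_inner_le_norm _ _))
      have key := (le_abs_self _).trans (hexp π h1 hN)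
      have b1 := mul_le_mul_of_nonneg_left hs' hL0
      have b2 := mul_le_mul hgη hs' (by positivity) hη.le
      have b3 := mul_le_mul_of_nonneg_left hle hK
      linarith
    have hcont : ContinuousAt (fun s : ℝ => ∫ x, f x ∂μ + (L + η) * s + K * s ^ p) δ :=
      (continuousAt_const.add (continuousAt_const.mul continuousAt_id)).add
        (continuousAt_const.mul (Real.continuousAt_rpow_const _ _ (.inr hp0.le)))
    exact ge_of_tendsto (hcont.tendsto.mono_left (nhdsWithin_le_nhds (s := Ioi δ)))
      (eventually_mem_nhdsWithin.mono hs)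
  · obtain ⟨T, hT, hTi, hT1, hTL⟩ : ∃ T : EuclideanSpace ℝ (Fin d) → EuclideanSpace ℝ (Fin d),
        Measurable T ∧ Integrable (fun x => ‖T x‖ ^ p) μ ∧ ∫ x, ‖T x‖ ^ p ∂μ ≤ 1 ∧
          ∫ x, ⟪gradient f x, T x⟫ ∂μ = L := by
      have hI0 : 0 ≤ ∫ x, ‖gradient f x‖ ^ q ∂μ := by positivity
      rcases hI0.eq_or_lt with h0 | hpos
      · refine ⟨fun _ => 0, measurable_const, ?_, ?_, ?_⟩
        · simp [Real.zero_rpow hp0.ne']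
        · simp [Real.zero_rpow hp0.ne']
        · rw [hL, ← h0, Real.zero_rpow (by positivity)]; simp
      · have hGL : Integrable (fun x => ‖gradient f x‖ ^ q) μ := by
          simpa [ENNReal.toReal_ofReal hq0.le] using hgradL.integrable_norm_rpow'
        obtain ⟨T, hT, hTi, hT1, hTL⟩ :=
          exists_integral_inner_eq_of_memLp hpq hgrad.measurable hGL hpos
        exact ⟨T, hT, hTi, hT1.le, hTL.trans hL.symm⟩
    have hm : Measurable fun x => (x, x + δ • T x) := by fun_prop
    have h1 : (μ.map fun x => (x, x + δ • T x)).map Prod.fst = μ := by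
      rw [Measure.map_map measurable_fst hm]
      exact Measure.map_id
    have e : ∀ x, ‖(x + δ • T x) - x‖ ^ p = δ ^ p * ‖T x‖ ^ p := fun x => by
      rw [add_sub_cancel_left, norm_smul, Real.norm_of_nonneg hδ,
        Real.mul_rpow hδ (norm_nonneg _)]
    have hNm : AEStronglyMeasurable (fun z : EuclideanSpace ℝ (Fin d) × EuclideanSpace ℝ (Fin d) =>
        ‖z.2 - z.1‖ ^ p) (μ.map fun x => (x, x + δ • T x)) :=
      (Measurable.pow_const (by fun_prop) p).aestronglyMeasurable
    have hN : Integrable (fun z : EuclideanSpace ℝ (Fin d) × EuclideanSpace ℝ (Fin d) =>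
        ‖z.2 - z.1‖ ^ p) (μ.map fun x => (x, x + δ • T x)) := by
      rw [integrable_map_measure hNm hm.aemeasurable]
      exact (hTi.const_mul (δ ^ p)).congr (.of_forall fun x => (e x).symm)
    have hle : ∫ z, ‖z.2 - z.1‖ ^ p ∂(μ.map fun x => (x, x + δ • T x)) ≤ δ ^ p := by
      rw [integral_map hm.aemeasurable hNm]
      simp only [e]
      rw [integral_const_mul]
      exact mul_le_of_le_one_right (by positivity) hT1
    have hin : ∫ z, ⟪gradient f z.1, z.2 - z.1⟫ ∂(μ.map fun x => (x, x + δ • T x)) = δ * L := by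
      rw [integral_map hm.aemeasurable (Measurable.aestronglyMeasurable (by fun_prop))]
      simp only [add_sub_cancel_left, real_inner_smul_right]
      rw [integral_const_mul, hTL]
    refine ⟨_, ⟨(μ.map fun x => (x, x + δ • T x)).map Prod.snd, ?_,
      Wp_le_of_coupling hp0 h1 rfl hN hδ hle, rfl⟩, ?_⟩
    · have := Measure.isProbabilityMeasure_map (μ := μ) hm.aemeasurable
      exact Measure.isProbabilityMeasure_map measurable_snd.aemeasurable
    · have hs' : (∫ z, ‖z.2 - z.1‖ ^ p ∂(μ.map fun x => (x, x + δ • T x))) ^ (1 / p) ≤ δ := by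
        rw [one_div]
        exact (Real.rpow_inv_le_iff_of_pos (by positivity) hδ hp0).2 hle
      have key := (neg_le_abs _).trans (hexp _ h1 hN)
      rw [hin] at key
      have b2 := mul_le_mul hgη hs' (by positivity) hη.le
      have b3 := mul_le_mul_of_nonneg_left hle hK
      linarith
end
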